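/- arXiv:1309.7891 — 6 statements merged into one kernel-verified Lean document; each statement's English description precedes it below -/
import Mathlib

section
/- For every matrix M ∈ ℝ^{m×n} and every positive integer k, there exists a matrix M' consisting of a subset of at most n(k+1) of the rows of M such that for every vector x ∈ ℝⁿ, if the number of rows r of M' with r·x ≠ 0 is at most k, then the number of rows of M with r·x ≠ 0 equals the number of rows of M' with r·x ≠ 0. -/
open Matrix

lemma basis_rows {m n : ℕ} (M : Matrix (Fin m) (Fin n) ℝ) (S : Finset (Fin m)) :
    ∃ B ⊆ S, B.card ≤ n ∧ ∀ x : Fin n → ℝ, (∀ i ∈ B, M i ⬝ᵥ x = 0) → ∀ i ∈ S, M i ⬝ᵥ x = 0 := by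
  classical
  obtain ⟨b, hbS, -, hspan, hli⟩ := exists_linearIndepOn_extension (K := ℝ)
    (v := fun i => M i) (s := ∅) (t := (S : Set (Fin m))) (linearIndepOn_empty ℝ _)
    (Set.empty_subset _)
  refine ⟨b.toFinset, by intro i hi; exact hbS (by simpa using hi), ?_, ?_⟩
  · have h := LinearIndependent.fintype_card_le_finrank hli
    rw [Set.toFinset_card]
    simpa using h
  · intro x hx i hi
    have hmem := hspan (Set.mem_image_of_mem _ (Finset.mem_coe.2 hi))
    change M i ∈ Submodule.span ℝ _ at hmem
    generalize M i = r at hmem ⊢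
    induction hmem using Submodule.span_induction with
    | mem y hy =>
      obtain ⟨j, hj, rfl⟩ := hy
      exact hx j (by simpa using hj)
    | zero => exact zero_dotProduct x
    | add y z _ _ hy hz => rw [add_dotProduct, hy, hz, add_zero]
    | smul a y _ hy => rw [smul_dotProduct, hy, smul_zero]

lemma rows_aux {m n : ℕ} (M : Matrix (Fin m) (Fin n) ℝ) (c : ℕ) : ∀ S : Finset (Fin m),
    ∃ T ⊆ S, T.card ≤ n * c ∧ ∀ x : Fin n → ℝ,
      (T.filter fun i => M i ⬝ᵥ x ≠ 0).card < c → ∀ i ∈ S, i ∉ T → M i ⬝ᵥ x = 0 := by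
  classical
  induction c with
  | zero => intro S; exact ⟨∅, by simp, by simp, by simp⟩
  | succ c ih =>
    intro S
    obtain ⟨B, hBS, hBc, hB⟩ := basis_rows M S
    obtain ⟨T, hTS, hTc, hT⟩ := ih (S \ B)
    refine ⟨B ∪ T, Finset.union_subset hBS (hTS.trans Finset.sdiff_subset), ?_, ?_⟩
    · have := Finset.card_union_le B T
      rw [Nat.mul_succ]
      omega
    · intro x hx i hi hiT
      by_cases hz : ∀ j ∈ B, M j ⬝ᵥ x = 0
      · exact hB x hz i hi
      · push Not at hz
        obtain ⟨j, hj, hjx⟩ := hz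
        simp only [Finset.mem_union, not_or] at hiT
        refine hT x ?_ i (Finset.mem_sdiff.2 ⟨hi, hiT.1⟩) hiT.2
        have hjT : j ∉ T := fun h => (Finset.mem_sdiff.1 (hTS h)).2 hj
        have : (T.filter fun i => M i ⬝ᵥ x ≠ 0) ⊂ ((B ∪ T).filter fun i => M i ⬝ᵥ x ≠ 0) := by
          refine (Finset.ssubset_iff_of_subset
            (Finset.filter_subset_filter _ Finset.subset_union_right)).2 ⟨j, ?_, ?_⟩
          · simp [hj, hjx]
          · simp [hjT]
        have := Finset.card_lt_card this
        omega

/-- For every real `m × n` matrix `M` and every positive integer `k`, there is a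
row-submatrix `M'` of `M` (given by a set `T` of at most `n (k+1)` row indices)
such that for every `x ∈ ℝⁿ`, if at most `k` rows `r` of `M'` have `r ⬝ x ≠ 0`,
then the number of rows of `M` with `r ⬝ x ≠ 0` equals the number of rows of
`M'` with `r ⬝ x ≠ 0`. -/
theorem matrix_row_submatrix_hamming (m n k : ℕ) (hk : 0 < k)
    (M : Matrix (Fin m) (Fin n) ℝ) :
    ∃ T : Finset (Fin m), T.card ≤ n * (k + 1) ∧
      ∀ x : Fin n → ℝ,
        (T.filter fun i => M i ⬝ᵥ x ≠ 0).card ≤ k →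
          (Finset.univ.filter fun i : Fin m => M i ⬝ᵥ x ≠ 0).card
            = (T.filter fun i => M i ⬝ᵥ x ≠ 0).card := by
  obtain ⟨T, -, hTc, hT⟩ := rows_aux M (k + 1) Finset.univ
  refine ⟨T, hTc, fun x hx => ?_⟩
  congr 1
  ext i
  simp only [Finset.mem_filter, Finset.mem_univ, true_and]
  refine ⟨fun h => ⟨?_, h⟩, fun h => h.2⟩
  by_contra hi
  exact h (hT x (by omega) i (Finset.mem_univ i) hi)
end

section
/- For every finite family S of affine linear equations in n real variables (each equation of the form a₁x₁ + a₂x₂ + ... + aₙxₙ + b = 0 with real coefficients a₁,...,aₙ and constant term b) and every positive integer k, there exists a subfamily S' ⊆ S containing at most (n+1)(k+1) equations such that every assignment of real values to the n variables that violates at most k equations of S' satisfies every equation of S \ S'. -/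
open Matrix

theorem kernel_aux {m : ℕ} {V : Type*} [AddCommGroup V] [Module ℝ V] [Module.Finite ℝ V]
    (v : Fin m → V) (j : ℕ) :
    ∃ T : Finset (Fin m), T.card ≤ Module.finrank ℝ V * j ∧
      ∀ f : V →ₗ[ℝ] ℝ, ∀ i ∉ T, f (v i) ≠ 0 → j ≤ (T.filter fun i => f (v i) ≠ 0).card := by
  classical
  induction j with
  | zero => exact ⟨∅, by simp, by simp⟩
  | succ j ih =>
    obtain ⟨T, hT, h⟩ := ih
    obtain ⟨B, hBT, -, hspan, hli⟩ :=
      exists_linearIndepOn_extension (K := ℝ) (v := v) (s := ∅) (t := {i | i ∉ T})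
        (linearIndepOn_empty ℝ v) (Set.empty_subset _)
    have hcard : B.toFinset.card ≤ Module.finrank ℝ V := by
      have := LinearIndependent.fintype_card_le_finrank hli
      rwa [Set.toFinset_card]
    refine ⟨T ∪ B.toFinset, ?_, ?_⟩
    · have := Finset.card_union_le T B.toFinset
      rw [mul_add, mul_one]
      omega
    · intro f i hi hf
      simp only [Finset.mem_union, not_or] at hi
      have h1 := h f i hi.1 hf
      have h2 : ∃ l ∈ B, f (v l) ≠ 0 := by
        by_contra! hc
        apply hf
        have hle : Submodule.span ℝ (v '' B) ≤ LinearMap.ker f := by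
          rw [Submodule.span_le]
          rintro _ ⟨l, hl, rfl⟩
          exact hc l hl
        exact hle (hspan ⟨i, hi.1, rfl⟩)
      obtain ⟨l, hl, hfl⟩ := h2
      have hlT : l ∉ T := hBT hl
      have hsub : insert l (T.filter fun i => f (v i) ≠ 0) ⊆
          (T ∪ B.toFinset).filter fun i => f (v i) ≠ 0 := by
        intro p hp
        simp only [Finset.mem_insert, Finset.mem_filter, Finset.mem_union,
          Set.mem_toFinset] at hp ⊢
        rcases hp with rfl | hp
        · exact ⟨Or.inr hl, hfl⟩
        · exact ⟨Or.inl hp.1, hp.2⟩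
      have h3 := Finset.card_le_card hsub
      rw [Finset.card_insert_of_notMem (by simp [hlT])] at h3
      omega

/-- For every finite (indexed) family of `m` affine linear equations
`aᵢ ⬝ x + bᵢ = 0` in `n` real variables and every positive integer `k`,
there is a subfamily `T` of at most `(n+1)(k+1)` equations such that every
assignment violating at most `k` equations of `T` satisfies all equations
outside `T`. -/
theorem linear_equations_kernel (m n k : ℕ) (hk : 0 < k)
    (a : Fin m → Fin n → ℝ) (b : Fin m → ℝ) :
    ∃ T : Finset (Fin m), T.card ≤ (n + 1) * (k + 1) ∧
      ∀ x : Fin n → ℝ,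
        (T.filter fun i => a i ⬝ᵥ x + b i ≠ 0).card ≤ k →
          ∀ i ∉ T, a i ⬝ᵥ x + b i = 0 := by
  obtain ⟨T, hT, h⟩ := kernel_aux (V := (Fin n → ℝ) × ℝ) (fun i => (a i, b i)) (k + 1)
  refine ⟨T, by simpa using hT, ?_⟩
  intro x hx i hi
  by_contra hne
  let f : (Fin n → ℝ) × ℝ →ₗ[ℝ] ℝ :=
    { toFun := fun p => p.1 ⬝ᵥ x + p.2
      map_add' := by intro p q; simp [add_dotProduct]; ring
      map_smul' := by intro c p; simp [smul_dotProduct]; ring }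
  have h1 : k + 1 ≤ (T.filter fun i => a i ⬝ᵥ x + b i ≠ 0).card := by
    have := h f i hi hne
    convert this using 2
    ext p
    simp [f]
  omega
end

section
/- Let G be a simple graph, x a vertex of G, and k a natural number. Suppose there exist k+1 cycles C₁, ..., C_{k+1} in G such that the vertex sets of any two distinct cycles Cᵢ and Cⱼ intersect exactly in {x} (an x-flower of order k+1). Then every set S of vertices with |S| ≤ k such that G − S contains no cycle must contain x. -/
/-- If a finite simple graph `G` has an `x`-flower of order `k+1`, i.e. `k+1` cycles
whose vertex sets pairwise intersect exactly in `{x}`, then every set `S` of at most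
`k` vertices such that `G − S` is acyclic must contain `x`. -/
theorem flower_forces_vertex {V : Type*} [Fintype V] (G : SimpleGraph V) (x : V) (k : ℕ)
    (C : Fin (k + 1) → G.Walk x x) (hcyc : ∀ i, (C i).IsCycle)
    (hflower : ∀ i j, i ≠ j →
      {v | v ∈ (C i).support} ∩ {v | v ∈ (C j).support} = ({x} : Set V))
    (S : Set V) (hS : S.ncard ≤ k)
    (hacyc : (G.induce {v | v ∉ S}).IsAcyclic) :
    x ∈ S := by
  by_contra hx
  have key : ∀ i, ∃ v, v ∈ (C i).support ∧ v ∈ S := by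
    intro i
    by_contra hno
    have hsub : ∀ v ∈ (C i).support, v ∈ {v | v ∉ S} := fun v hv hvS => hno ⟨v, hv, hvS⟩
    refine hacyc ((C i).induce {v | v ∉ S} hsub) ?_
    have h := hcyc i
    rw [← SimpleGraph.Walk.map_induce (C i) hsub] at h
    exact h.of_map
  choose f hf hfS using key
  have hinj : Function.Injective f := by
    intro i j hij
    by_contra hne
    have hmem : f i ∈ ({x} : Set V) := by
      rw [← hflower i j hne]
      exact ⟨hf i, by rw [hij]; exact hf j⟩
    rw [Set.mem_singleton_iff] at hmem
    exact hx (hmem ▸ hfS i)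
  have h1 : (Set.range f).ncard = k + 1 := by
    rw [← Set.image_univ, Set.ncard_image_of_injective _ hinj, Set.ncard_univ, Nat.card_eq_fintype_card, Fintype.card_fin]
  have h2 := Set.ncard_le_ncard (Set.range_subset_iff.2 hfS) S.toFinite
  omega
end

section
/- Let G be a finite simple graph with no cycles (a forest) and let Q be a set of vertices of G. If at least one connected component of G − Q has exactly two neighbors in Q, then the number of connected components C of G − Q such that the neighborhood in G of the vertex set of C intersects Q in exactly two vertices is at most |Q| − 1. -/
/-- The set of neighbors in `Q` of a connected component `C` of `G − Q`:
the vertices `q ∈ Q` adjacent in `G` to at least one vertex of `C`. -/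
def componentNbrsIn {V : Type*} (G : SimpleGraph V) (Q : Set V)
    (C : (G.induce {v | v ∉ Q}).ConnectedComponent) : Set V :=
  {q | q ∈ Q ∧ ∃ v : ↥{v | v ∉ Q},
      (G.induce {v | v ∉ Q}).connectedComponentMk v = C ∧ G.Adj q ↑v}

theorem reach_aux {V : Type*} (G : SimpleGraph V) (Q : Set V) (q v : V) (hq : q ∈ Q)
    (u w : ↥{v | v ∉ Q})
    (h : (G.induce {v | v ∉ Q}).Reachable u w) :
    (G.deleteEdges {s(q, v)}).Reachable (u : V) (w : V) := by
  let φ : (G.induce {v | v ∉ Q}) →g (G.deleteEdges {s(q, v)}) :=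
    { toFun := fun x => (x : V)
      map_rel' := by
        rintro ⟨a, ha⟩ ⟨b, hb⟩ hab
        have hab' : G.Adj a b := hab
        simp only [Set.mem_setOf_eq] at ha hb
        simp only [SimpleGraph.deleteEdges_adj, Set.mem_singleton_iff, Sym2.eq_iff]
        refine ⟨hab', ?_⟩
        rintro (⟨rfl, -⟩ | ⟨-, rfl⟩)
        · exact ha hq
        · exact hb hq }
  exact h.map φ

theorem sep_aux {V : Type*} (G : SimpleGraph V) (hG : G.IsAcyclic) (Q : Set V)
    (C : (G.induce {v | v ∉ Q}).ConnectedComponent)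
    (hC : (componentNbrsIn G Q C).ncard = 2) :
    ∃ (a b : V) (f : V → ℚ), a ∈ componentNbrsIn G Q C ∧ b ∈ componentNbrsIn G Q C ∧
      f a - f b = 1 ∧ ∀ C', C' ≠ C → ∀ x ∈ componentNbrsIn G Q C',
        ∀ y ∈ componentNbrsIn G Q C', f x = f y := by
  classical
  obtain ⟨a, b, hab, hCab⟩ := Set.ncard_eq_two.mp hC
  have ha : a ∈ componentNbrsIn G Q C := by simp [hCab]
  have hb : b ∈ componentNbrsIn G Q C := by simp [hCab]
  obtain ⟨haQ, v, hv, hav⟩ := id ha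
  obtain ⟨hbQ, w, hw, hbw⟩ := id hb
  let H := G.deleteEdges {s(a, (v : V))}
  have hbridge : ¬ H.Reachable a v := by
    have := SimpleGraph.isAcyclic_iff_forall_adj_isBridge.mp hG hav
    exact SimpleGraph.isBridge_iff.mp this
  refine ⟨a, b, fun x => if H.Reachable a x then 1 else 0, ha, hb, ?_, ?_⟩
  · have h2 : ¬ H.Reachable a b := by
      intro h
      have h1 : H.Adj b w := by
        simp only [H, SimpleGraph.deleteEdges_adj, Set.mem_singleton_iff, Sym2.eq_iff]
        refine ⟨hbw, ?_⟩
        rintro (⟨h, -⟩ | ⟨-, h⟩)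
        · exact hab h.symm
        · exact w.2 (h ▸ haQ)
      have h3 : H.Reachable w v := reach_aux G Q a v haQ w v
        (SimpleGraph.ConnectedComponent.exact (hw.trans hv.symm))
      exact hbridge ((h.trans h1.reachable).trans h3)
    simp [h2]
  · intro C' hne x hx y hy
    have key : ∀ z (u : ↥{v | v ∉ Q}), (G.induce {v | v ∉ Q}).connectedComponentMk u = C' →
        G.Adj z u → H.Adj z u := by
      intro z u hu hz
      simp only [H, SimpleGraph.deleteEdges_adj, Set.mem_singleton_iff, Sym2.eq_iff]
      refine ⟨hz, ?_⟩
      rintro (⟨-, h⟩ | ⟨-, h⟩)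
      · apply hne
        rw [← hu, ← hv, Subtype.ext h]
      · exact u.2 (h ▸ haQ)
    obtain ⟨-, u, hu, hxu⟩ := hx
    obtain ⟨-, t, ht, hyt⟩ := hy
    have hxy : H.Reachable x y := ((key x u hu hxu).reachable.trans
      (reach_aux G Q a v haQ u t (SimpleGraph.ConnectedComponent.exact (hu.trans ht.symm)))).trans
      (key y t ht hyt).symm.reachable
    have : H.Reachable a x ↔ H.Reachable a y :=
      ⟨fun h => h.trans hxy, fun h => h.trans hxy.symm⟩
    simp only [this]

/-- In a forest `G`, if some connected component of `G − Q` has exactly two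
neighbors in `Q`, then the number of connected components of `G − Q` having
exactly two neighbors in `Q` is at most `|Q| − 1`. -/
theorem forest_two_neighbor_components_bound {V : Type*} [Fintype V]
    (G : SimpleGraph V) (hG : G.IsAcyclic) (Q : Set V)
    (hex : ∃ C : (G.induce {v | v ∉ Q}).ConnectedComponent,
      (componentNbrsIn G Q C).ncard = 2) :
    {C : (G.induce {v | v ∉ Q}).ConnectedComponent |
        (componentNbrsIn G Q C).ncard = 2}.ncard ≤ Q.ncard - 1 := by
  classical
  set S := {C : (G.induce {v | v ∉ Q}).ConnectedComponent |
        (componentNbrsIn G Q C).ncard = 2} with hS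
  choose a b f ha hb hf hf' using fun C : S => sep_aux G hG Q C.1 C.2
  haveI : Finite (G.induce {v | v ∉ Q}).ConnectedComponent := Quot.finite _
  haveI : Fintype S := Fintype.ofFinite _
  let F : Option S → (Q → ℚ) := fun o => match o with
    | none => fun _ => 1
    | some C => fun x => f C x
  have hli : LinearIndependent ℚ F := by
    rw [Fintype.linearIndependent_iff]
    intro g hg
    have hx : ∀ x ∈ Q, g none + ∑ C : S, g (some C) * f C x = 0 := by
      intro x hx
      have := congrFun hg ⟨x, hx⟩
      simpa [Fintype.sum_option, F] using this
    have hsome : ∀ C, g (some C) = 0 := by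
      intro C
      have h1 := hx _ (ha C).1
      have h2 := hx _ (hb C).1
      have h3 : ∑ D : S, g (some D) * (f D (a C) - f D (b C)) = 0 := by
        simp only [mul_sub, Finset.sum_sub_distrib]
        linarith
      rw [Finset.sum_eq_single C] at h3
      · simpa [hf C] using h3
      · intro D _ hD
        rw [hf' D C.1 (fun h => hD (Subtype.ext h.symm)) _ (ha C) _ (hb C)]
        simp
      · simp
    intro o
    cases o with
    | some C => exact hsome C
    | none =>
      obtain ⟨C, hC⟩ := hex
      have := hx _ (ha ⟨C, hC⟩).1
      simpa [hsome] using this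
  have hcard := hli.fintype_card_le_finrank
  rw [Module.finrank_fintype_fun_eq_card, Fintype.card_option, ← Nat.card_eq_fintype_card,
    ← Nat.card_eq_fintype_card, Nat.card_coe_set_eq, Nat.card_coe_set_eq] at hcard
  omega
end

section
/- Let G be a finite simple graph, x a vertex of G, and k a natural number. Then either G contains k+1 cycles whose vertex sets pairwise intersect exactly in {x} (an x-flower of order k+1), or there exists a set Z ⊆ V(G) \ {x} of size at most 2k that intersects the vertex set of every cycle of G passing through x. -/
/-- A walk between two distinct neighbours of `x` avoiding `x` closes up to a cycle. -/
lemma exists_cycle_of_walk {V : Type*} (G : SimpleGraph V) {x a b : V}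
    (ha : G.Adj x a) (hb : G.Adj x b) (hab : a ≠ b) (w : G.Walk a b) (hw : x ∉ w.support) :
    ∃ c : G.Walk x x, c.IsCycle ∧ ∀ v ∈ c.support, v = x ∨ v ∈ w.support := by
  classical
  have hx : x ∉ w.bypass.support := fun h => hw (w.support_bypass_subset_support h)
  refine ⟨SimpleGraph.Walk.cons ha (w.bypass.concat hb.symm), ?_, ?_⟩
  · rw [SimpleGraph.Walk.cons_isCycle_iff, SimpleGraph.Walk.concat_isPath_iff]
    refine ⟨⟨w.bypass_isPath, hx⟩, ?_⟩
    rw [SimpleGraph.Walk.edges_concat]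
    simp only [List.concat_eq_append, List.mem_append, List.mem_singleton, not_or]
    refine ⟨fun h => hx (SimpleGraph.Walk.fst_mem_support_of_mem_edges _ h), ?_⟩
    intro h
    rw [Sym2.eq_iff] at h
    rcases h with ⟨h1, h2⟩ | ⟨h1, h2⟩
    · exact hb.ne h1
    · exact hab h2
  · intro v hv
    simp only [SimpleGraph.Walk.support_cons, SimpleGraph.Walk.support_concat,
      List.mem_cons, List.mem_append, List.not_mem_nil, or_false] at hv
    rcases hv with h | h | h
    · exact Or.inl h
    · exact Or.inr (w.support_bypass_subset_support h)
    · exact Or.inl h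

lemma conj_apply {X : Type*} (m n : Equiv.Perm X) (hm : ∀ p, m (m p) = p)
    (hn : ∀ p, n (n p) = p) (t : X) (ht : n t = t) (i : ℤ) :
    n (((n * m) ^ i) t) = ((n * m) ^ (-i)) t := by
  have hmm : m⁻¹ = m := by ext p; rw [Equiv.Perm.inv_eq_iff_eq, hm]
  have hnn : n⁻¹ = n := by ext p; rw [Equiv.Perm.inv_eq_iff_eq, hn]
  have h1 : n * (n * m) * n⁻¹ = (n * m)⁻¹ := by
    rw [mul_inv_rev, hmm, hnn]
    ext p; simp [hn]
  have h2 : n * (n * m) ^ i * n⁻¹ = (n * m) ^ (-i) := by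
    rw [← conj_zpow, h1, inv_zpow, zpow_neg]
  rw [← h2, hnn]
  simp [ht]

lemma exists_partner {X : Type*} [Finite X] (m n : Equiv.Perm X) (hm : ∀ p, m (m p) = p)
    (hn : ∀ p, n (n p) = p) (hf : ∀ p, m p ≠ p) (t : X) (ht : n t = t) :
    ∃ r : ℕ, ((n * m) ^ r) t ≠ t ∧ n (((n * m) ^ r) t) = ((n * m) ^ r) t ∧
      ∀ s, (n * m).SameCycle t s → n s = s → s = t ∨ s = ((n * m) ^ r) t := by
  have key := fun i : ℤ => conj_apply m n hm hn t ht i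
  set c := n * m with hc
  have hdvd : ∀ j : ℤ, (c ^ j) t = t ↔ (MulAction.period c t : ℤ) ∣ j := fun j =>
    MulAction.zpow_smul_eq_iff_period_dvd (g := c) (a := t)
  have heq : ∀ i j : ℤ, (c ^ i) t = (c ^ j) t ↔ (MulAction.period c t : ℤ) ∣ i - j := by
    intro i j
    rw [← hdvd, sub_eq_add_neg, add_comm, zpow_add, zpow_neg, Equiv.Perm.mul_apply,
      Equiv.Perm.inv_eq_iff_eq]
  have hpos : 0 < MulAction.period c t :=
    MulAction.period_pos_of_orderOf_pos (isOfFinOrder_of_finite c).orderOf_pos t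
  set l := MulAction.period c t with hl
  have hmi : ∀ i : ℤ, m ((c ^ i) t) = (c ^ (-(i + 1))) t := by
    intro i
    rw [← key, add_comm, zpow_add, zpow_one, Equiv.Perm.mul_apply, hc, Equiv.Perm.mul_apply, hn]
  have heven : Even l := by
    by_contra h
    rw [Nat.not_even_iff_odd] at h
    obtain ⟨q, hq⟩ := h
    apply hf ((c ^ (q : ℤ)) t)
    rw [hmi, heq]
    exact ⟨-1, by rw [hq]; push_cast; ring⟩
  obtain ⟨r, hr⟩ := heven
  refine ⟨r, ?_, ?_, ?_⟩
  · have := hdvd r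
    rw [zpow_natCast] at this
    rw [ne_eq, this]
    intro h
    have := Nat.le_of_dvd (by omega) (Int.natCast_dvd_natCast.1 h)
    omega
  · have := key r
    rw [zpow_natCast] at this
    rw [this, ← zpow_natCast, heq]
    exact ⟨-1, by rw [hr]; push_cast; ring⟩
  · rintro s ⟨i, rfl⟩ hs
    rw [key, heq] at hs
    obtain ⟨j, hj⟩ := hs
    rw [← zpow_natCast, heq, hdvd]
    rw [hr] at hj ⊢
    push_cast at hj ⊢
    have h2 : i = -(r * j) := by linarith
    rcases Int.even_or_odd' j with ⟨e, he | he⟩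
    · left; exact ⟨-e, by rw [h2, he]; ring⟩
    · right; exact ⟨-e - 1, by rw [h2, he]; ring⟩

lemma flower_of_matching {V X : Type*} [Finite X] (G : SimpleGraph V) (x : V) (k : ℕ)
    (π : X → V) (m n : Equiv.Perm X) (hm : ∀ p, m (m p) = p)
    (hn : ∀ p, n (n p) = p) (hf : ∀ p, m p ≠ p)
    (hπn : ∀ p, π (n p) = π p)
    (hπ : ∀ p q, π p = π q → p = q ∨ p = n q ∨ π p = x)
    (hadj : ∀ p, π p ≠ x → π (m p) ≠ x → π p = π (m p) ∨ G.Adj (π p) (π (m p)))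
    (hfix : ∀ p, n p = p ↔ π p = x ∨ G.Adj x (π p))
    (hcard : {p | π p = x}.ncard + 2 * (k + 1) ≤ {p | G.Adj x (π p)}.ncard) :
    (∃ C : Fin (k + 1) → G.Walk x x, (∀ i, (C i).IsCycle) ∧
      ∀ i j, i ≠ j →
        {v | v ∈ (C i).support} ∩ {v | v ∈ (C j).support} = ({x} : Set V)) := by
  classical
  have hpart := fun t ht => exists_partner m n hm hn hf t ht
  have key := fun t ht => conj_apply m n hm hn t ht
  have hcapp : ∀ p, (n * m) p = n (m p) := fun p => rfl
  set c := n * m with hc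
  choose! r hr1 hr2 hr3 using hpart
  have hAfix : ∀ t, G.Adj x (π t) → n t = t := fun t h => (hfix t).2 (Or.inr h)
  have hsame : ∀ t (i : ℕ), c.SameCycle t ((c ^ i) t) := fun t i => ⟨i, by simp⟩
  let A : Set X := {p | G.Adj x (π p)}
  let A1 : Set X := {t | G.Adj x (π t) ∧ G.Adj x (π ((c ^ r t) t))}
  -- partner map is injective on terminals
  have hinj : ∀ s t, n s = s → n t = t → (c ^ r s) s = (c ^ r t) t → s = t := by
    intro s t hs ht h
    have h1 : c.SameCycle t s := (hsame t (r t)).trans (h ▸ (hsame s (r s)).symm)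
    rcases hr3 t ht s h1 hs with h2 | h2
    · exact h2
    · exact absurd (h.trans h2.symm) (hr1 s hs)
  have hA1 : 2 * (k + 1) ≤ A1.ncard := by
    have h1 : (A \ A1).ncard ≤ {p | π p = x}.ncard := by
      apply Set.ncard_le_ncard_of_injOn (fun t => (c ^ r t) t)
      · rintro t ⟨ht, ht1⟩
        have h2 := (hfix _).1 (hr2 t (hAfix t ht))
        rcases h2 with h2 | h2
        · exact h2
        · exact absurd ⟨ht, h2⟩ ht1
      · rintro s ⟨hs, -⟩ t ⟨ht, -⟩ h
        exact hinj s t (hAfix s hs) (hAfix t ht) h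
    have h2 : (A \ A1).ncard + A1.ncard = A.ncard :=
      Set.ncard_sdiff_add_ncard_of_subset (fun t ht => ht.1) (Set.toFinite _)
    have h3 : A.ncard = {p | G.Adj x (π p)}.ncard := rfl
    omega
  -- choose representatives
  obtain ⟨f, hfA, hfne⟩ : ∃ f : Fin (k + 1) → X, (∀ i, f i ∈ A1) ∧
      ∀ i j, i ≠ j → ¬ c.SameCycle (f i) (f j) := by
    let Q : X → Quotient (Equiv.Perm.SameCycle.setoid c) := fun t => Quotient.mk _ t
    have hle : A1.toFinite.toFinset.card ≤ 2 * (A1.toFinite.toFinset.image Q).card := by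
      apply Finset.card_le_mul_card_image
      intro b hb
      obtain ⟨t, ht, rfl⟩ := Finset.mem_image.1 hb
      rw [Set.Finite.mem_toFinset] at ht
      calc _ ≤ ({t, (c ^ r t) t} : Finset X).card := by
            apply Finset.card_le_card
            intro s hs
            rw [Finset.mem_filter, Set.Finite.mem_toFinset] at hs
            have h1 : c.SameCycle s t := Quotient.exact hs.2
            have := hr3 t (hAfix t ht.1) s h1.symm (hAfix s hs.1.1)
            simpa using this
        _ ≤ 2 := Finset.card_le_two
    rw [← Set.ncard_eq_toFinset_card _ A1.toFinite] at hle
    have hk : Fintype.card (Fin (k + 1)) ≤ Fintype.card (A1.toFinite.toFinset.image Q) := by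
      rw [Fintype.card_fin, Fintype.card_coe]; omega
    obtain ⟨e⟩ := Function.Embedding.nonempty_of_card_le hk
    have : ∀ i, ∃ t ∈ A1, Q t = (e i).1 := by
      intro i
      have := (e i).2
      rw [Finset.mem_image] at this
      simpa using this
    choose f h1 h2 using this
    refine ⟨f, h1, fun i j hij h => hij ?_⟩
    apply e.injective
    apply Subtype.ext
    rw [← h2, ← h2]
    exact Quotient.sound h
  -- walks
  have hwalk : ∀ t ∈ A1, ∀ i : ℕ, ∃ w : G.Walk (π t) (π ((c ^ i) t)),
      ∀ v ∈ w.support, v ≠ x ∧ ∃ q, c.SameCycle t q ∧ π q = v := by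
    intro t ht
    have hnx : ∀ q, c.SameCycle t q → π q ≠ x := by
      intro q hq h
      rcases hr3 t (hAfix t ht.1) q hq ((hfix q).2 (Or.inl h)) with h1 | h1
      · rw [h1] at h; exact ht.1.ne h.symm
      · rw [h1] at h; exact ht.2.ne h.symm
    intro i
    induction i with
    | zero =>
      refine ⟨SimpleGraph.Walk.nil, ?_⟩
      intro v hv
      have hv : v = π t := List.mem_singleton.1 hv
      subst hv
      exact ⟨hnx t (Equiv.Perm.SameCycle.refl _ _), t, Equiv.Perm.SameCycle.refl _ _, rfl⟩
    | succ i ih =>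
      obtain ⟨w, hw⟩ := ih
      have hs := hsame t (i + 1)
      have e1 : π ((c ^ (i + 1)) t) = π (m ((c ^ i) t)) := by
        rw [pow_succ', Equiv.Perm.mul_apply, hcapp, hπn]
      have h2 : π (m ((c ^ i) t)) ≠ x := e1 ▸ hnx _ hs
      rcases hadj _ (hnx _ (hsame t i)) h2 with h | h
      · exact ⟨w.copy rfl (h.trans e1.symm), by simpa using hw⟩
      · rw [← e1] at h
        refine ⟨w.concat h, ?_⟩
        intro v hv
        simp only [SimpleGraph.Walk.support_concat,
          List.mem_append, List.mem_cons, List.not_mem_nil, or_false] at hv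
        rcases hv with hv | rfl
        · exact hw v hv
        · exact ⟨hnx _ hs, _, hs, rfl⟩
  have hcyc : ∀ i, ∃ C : G.Walk x x, C.IsCycle ∧
      ∀ v ∈ C.support, v = x ∨ ∃ q, c.SameCycle (f i) q ∧ π q = v := by
    intro i
    obtain ⟨w, hw⟩ := hwalk (f i) (hfA i) (r (f i))
    have hne : π (f i) ≠ π ((c ^ r (f i)) (f i)) := by
      intro h
      have hfi := hAfix _ (hfA i).1
      rcases hπ _ _ h with h1 | h1 | h1
      · exact hr1 _ hfi h1.symm
      · rw [hr2 _ hfi] at h1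
        exact hr1 _ hfi h1.symm
      · exact (hfA i).1.ne h1.symm
    obtain ⟨C, h1, h2⟩ := exists_cycle_of_walk G (hfA i).1 (hfA i).2 hne w
      (fun h => (hw x h).1 rfl)
    exact ⟨C, h1, fun v hv => (h2 v hv).imp id (fun h => (hw v h).2)⟩
  choose C hC1 hC2 using hcyc
  refine ⟨C, hC1, fun i j hij => ?_⟩
  ext v
  simp only [Set.mem_inter_iff, Set.mem_ofPred_eq, Set.mem_singleton_iff]
  constructor
  · rintro ⟨h1, h2⟩
    rcases hC2 i v h1 with h1 | ⟨q, hq, rfl⟩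
    · exact h1
    rcases hC2 j _ h2 with h2 | ⟨q', hq', h⟩
    · exact h2
    rcases hπ _ _ h with h3 | h3 | h3
    · subst h3
      exact absurd (hq.trans hq'.symm) (hfne i j hij)
    · exfalso
      apply hfne i j hij
      refine Equiv.Perm.SameCycle.trans ?_ hq'.symm
      obtain ⟨z, rfl⟩ := hq
      rw [h3, key _ (hAfix _ (hfA i).1)]
      exact ⟨_, rfl⟩
    · exact h ▸ h3
  · rintro rfl
    exact ⟨SimpleGraph.Walk.start_mem_support _, SimpleGraph.Walk.start_mem_support _⟩

lemma even_ncard_of_involution {Y : Type*} [Finite Y] (s : Set Y) (g : Y → Y)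
    (h1 : ∀ p ∈ s, g p ∈ s) (h2 : ∀ p, g (g p) = p) (h3 : ∀ p ∈ s, g p ≠ p) : Even s.ncard := by
  classical
  rw [Set.ncard_eq_toFinset_card s (Set.toFinite s)]
  rw [← ZMod.natCast_eq_zero_iff_even]
  have := Finset.sum_involution (s := (Set.toFinite s).toFinset) (f := fun _ => (1 : ZMod 2))
    (fun p _ => g p) (by intros; decide) (by intro p hp _; exact h3 p (by simpa using hp))
    (by intro p hp; simpa using h1 p (by simpa using hp)) (by intro p hp; exact h2 p)
  simpa using this

/-- Every cycle through `x` contains a walk joining two distinct neighbours of `x` off `x`. -/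
lemma exists_walk_of_cycle {V : Type*} (G : SimpleGraph V) {x u : V} (c : G.Walk u u)
    (hc : c.IsCycle) (hx : x ∈ c.support) :
    ∃ a b, G.Adj x a ∧ G.Adj x b ∧ a ≠ b ∧ ∃ w : G.Walk a b, x ∉ w.support ∧
      ∀ v ∈ w.support, v ∈ c.support := by
  classical
  have hr := hc.rotate hx
  have hs : ∀ v ∈ (c.rotate x hx).support, v ∈ c.support := by
    intro v hv
    exact (c.mem_support_rotate_iff _ hx).1 hv
  generalize c.rotate x hx = d at hr hs
  cases d with
  | nil => exact absurd hr SimpleGraph.Walk.not_isCycle_nil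
  | cons h p =>
    rename_i a
    rw [SimpleGraph.Walk.cons_isCycle_iff] at hr
    obtain ⟨hp, he⟩ := hr
    induction p using SimpleGraph.Walk.concatRec with
    | Hnil => exact absurd h (SimpleGraph.irrefl _)
    | Hconcat q h' ih =>
      rename_i a b x'
      rw [SimpleGraph.Walk.concat_isPath_iff] at hp
      refine ⟨a, b, h, h'.symm, ?_, q, hp.2, ?_⟩
      · rintro rfl
        apply he
        rw [SimpleGraph.Walk.edges_concat]
        simp [Sym2.eq_swap]
      · intro v hv
        apply hs
        simp [SimpleGraph.Walk.support_concat, hv]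

lemma hitting_of_violator {V X : Type*} [Finite V] [Finite X] (G : SimpleGraph V) (x : V) (k : ℕ)
    (π : X → V) (n : X → X) (H : SimpleGraph X)
    (hH : ∀ p q, H.Adj p q ↔ p ≠ q ∧ (π p = x ∨ π q = x ∨ π p = π q ∨ G.Adj (π p) (π q)))
    (hn : ∀ p, n (n p) = p)
    (hπn : ∀ p, π (n p) = π p)
    (hπ : ∀ p q, π p = π q → p = q ∨ p = n q ∨ π p = x)
    (hfix : ∀ p, n p = p ↔ π p = x ∨ G.Adj x (π p))
    (hsurj : ∀ v, v ≠ x → ∃ p, π p = v)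
    (hcard : {v | G.Adj x v}.ncard = {p | π p = x}.ncard + 2 * (k + 1))
    (heven : Even (Nat.card X)) (S : Set X) (hS : H.IsTutteViolator S) :
    (∃ Z : Set V, x ∉ Z ∧ Z.ncard ≤ 2 * k ∧
      ∀ (u : V) (c : G.Walk u u), c.IsCycle → x ∈ c.support →
        ∃ z ∈ Z, z ∈ c.support) := by
  classical
  unfold SimpleGraph.IsTutteViolator at hS
  have hverts : ∀ p, p ∈ ((⊤ : H.Subgraph).deleteVerts S).verts ↔ p ∉ S := by
    intro p; simp
  have hKadj : ∀ p q : ((⊤ : H.Subgraph).deleteVerts S).verts,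
      ((⊤ : H.Subgraph).deleteVerts S).coe.Adj p q ↔ H.Adj p q := by
    rintro ⟨p, hp⟩ ⟨q, hq⟩
    have h1 := (hverts p).1 hp
    have h2 := (hverts q).1 hq
    simp [h1, h2]
  have hcardK : Nat.card ((⊤ : H.Subgraph).deleteVerts S).verts + S.ncard = Nat.card X := by
    rw [Nat.card_coe_set_eq]
    have : ((⊤ : H.Subgraph).deleteVerts S).verts = Sᶜ := by ext p; simp
    rw [this, add_comm, Set.ncard_add_ncard_compl]
  have hpar := SimpleGraph.odd_ncard_oddComponents (((⊤ : H.Subgraph).deleteVerts S).coe)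
  generalize (⊤ : H.Subgraph).deleteVerts S = L at *
  generalize L.coe = K at *
  have h2 : S.ncard + 2 ≤ K.oddComponents.ncard := by
    rcases Nat.lt_or_ge (S.ncard + 1) K.oddComponents.ncard with h | h
    · omega
    · have : K.oddComponents.ncard = S.ncard + 1 := by omega
      rw [this] at hpar
      rw [← hcardK] at heven
      rw [Nat.even_add] at heven
      rw [← Nat.not_even_iff_odd, ← Nat.not_even_iff_odd, heven, Nat.even_add_one] at hpar
      tauto
  have hreach : ∀ p q : L.verts, (π p = x ∨ π q = x ∨ π p = π q ∨ G.Adj (π p) (π q)) →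
      K.Reachable p q := by
    intro p q h
    by_cases hpq : p = q
    · rw [hpq]
    · apply SimpleGraph.Adj.reachable
      rw [hKadj, hH]
      exact ⟨fun h => hpq (Subtype.ext h), h⟩
  have hxS : ∀ p, π p = x → p ∈ S := by
    intro p hp
    by_contra hpS
    have hone : K.oddComponents.ncard ≤ 1 := by
      rw [Set.ncard_le_one_iff]
      intro a b _ _
      induction a using SimpleGraph.ConnectedComponent.ind
      induction b using SimpleGraph.ConnectedComponent.ind
      rw [SimpleGraph.ConnectedComponent.eq]
      exact (hreach _ ⟨p, (hverts p).2 hpS⟩ (Or.inr (Or.inl hp))).trans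
        (hreach ⟨p, (hverts p).2 hpS⟩ _ (Or.inl hp))
    omega
  let CA : Set K.ConnectedComponent :=
    {c | ∃ p : L.verts, K.connectedComponentMk p = c ∧ G.Adj x (π p)}
  let HW : Set L.verts := {p | n p ∈ S}
  let HF : Set X := {p | p ∉ S ∧ n p ∈ S}
  have hHW : HW.ncard ≤ HF.ncard := by
    apply Set.ncard_le_ncard_of_injOn (fun p => p.1)
    · intro p hp
      exact ⟨(hverts _).1 p.2, hp⟩
    · intro p _ q _ h
      exact Subtype.ext h
  have hodd : K.oddComponents ⊆ CA ∪ K.connectedComponentMk '' HW := by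
    intro c hc
    by_contra hcon
    rw [Set.mem_union, not_or] at hcon
    obtain ⟨hc1, hc2⟩ := hcon
    have hev : Even (Subtype.val '' c.supp : Set X).ncard := by
      apply even_ncard_of_involution _ n _ hn
      · rintro _ ⟨p, hp, rfl⟩ hnp
        rcases (hfix _).1 hnp with h | h
        · exact (hverts _).1 p.2 (hxS _ h)
        · exact hc1 ⟨p, hp, h⟩
      · rintro _ ⟨p, hp, rfl⟩
        have hnp : n p ∉ S := fun h => hc2 ⟨p, h, hp⟩
        refine ⟨⟨n p, (hverts _).2 hnp⟩, ?_, rfl⟩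
        rw [SimpleGraph.ConnectedComponent.mem_supp_iff] at hp ⊢
        rw [← hp, SimpleGraph.ConnectedComponent.eq]
        exact hreach _ _ (Or.inr (Or.inr (Or.inl (hπn _))))
    rw [Set.ncard_image_of_injective _ Subtype.val_injective] at hev
    exact (Nat.not_odd_iff_even.2 hev) hc
  have hN : K.oddComponents.ncard ≤ CA.ncard + HF.ncard := by
    have e1 := Set.ncard_le_ncard hodd (Set.toFinite _)
    have e2 := Set.ncard_union_le CA (K.connectedComponentMk '' HW)
    have e3 := Set.ncard_image_le (f := K.connectedComponentMk) (Set.toFinite HW)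
    omega
  let B2 : Set V := {v | v ≠ x ∧ ∀ p, π p = v → p ∈ S ∧ ¬ G.Adj x v}
  by_cases hWn : Nonempty L.verts
  swap
  · exfalso
    have : IsEmpty L.verts := not_nonempty_iff.1 hWn
    have : K.oddComponents.ncard = 0 := by
      have : IsEmpty K.ConnectedComponent := ⟨fun c => by
        induction c using SimpleGraph.ConnectedComponent.ind with
        | _ v => exact hWn ⟨v⟩⟩
      rw [Set.eq_empty_of_isEmpty K.oddComponents, Set.ncard_empty]
    omega
  have hXn : Nonempty X := hWn.map Subtype.val
  choose! sec hsec using hsurj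
  have hSc : {p | π p = x}.ncard + HF.ncard + B2.ncard ≤ S.ncard := by
    have ninj : Function.Injective n := Function.Involutive.injective hn
    rw [← Set.ncard_image_of_injective HF ninj]
    have : B2.ncard = (sec '' B2).ncard := by
      rw [Set.ncard_image_of_injOn]
      intro a ha b hb h
      rw [← hsec a ha.1, ← hsec b hb.1, h]
    rw [this, ← Set.ncard_union_eq _ (Set.toFinite _) (Set.toFinite _),
      ← Set.ncard_union_eq _ (Set.toFinite _) (Set.toFinite _)]
    · apply Set.ncard_le_ncard _ (Set.toFinite _)
      rintro p ((hp | ⟨q, hq, rfl⟩) | ⟨v, hv, rfl⟩)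
      · exact hxS p hp
      · exact hq.2
      · exact (hv.2 _ (hsec v hv.1)).1
    · rw [Set.disjoint_left]
      rintro p (hp | ⟨q, hq, rfl⟩) ⟨v, hv, h⟩
      · subst h
        exact hv.1 ((hsec v hv.1).symm.trans hp)
      · apply hq.1
        apply (hv.2 q _).1
        rw [← hπn, ← h, hsec v hv.1]
    · rw [Set.disjoint_left]
      rintro p hp ⟨q, hq, rfl⟩
      exact hq.1 (hxS q ((hπn q).symm.trans hp))
  have hrep : ∀ c : K.ConnectedComponent, c ∈ CA →
    ∃ p : L.verts, K.connectedComponentMk p = c ∧ G.Adj x (π p) := fun c hc => hc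
  choose! rep hrep1 hrep2 using hrep
  let R : Set V := (fun c => π (rep c)) '' CA
  have hAinj : ∀ p q, G.Adj x (π p) → π p = π q → p = q := by
    intro p q hp h
    rcases hπ p q h with h1 | h1 | h1
    · exact h1
    · rw [h1]; rw [h] at hp; exact (hfix q).2 (Or.inr hp)
    · exact absurd h1.symm hp.ne
  have hRc : R.ncard = CA.ncard := by
    apply Set.ncard_image_of_injOn
    intro a ha b hb h
    rw [← hrep1 a ha, ← hrep1 b hb]
    congr 1
    exact Subtype.ext (hAinj _ _ (hrep2 a ha) h)
  have hRA : R ⊆ {v | G.Adj x v} := by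
    rintro _ ⟨c, hc, rfl⟩
    exact hrep2 c hc
  have hRd := Set.ncard_sdiff_add_ncard_of_subset hRA (Set.toFinite _)
  refine ⟨({v | G.Adj x v} \ R) ∪ B2, ?_, ?_, ?_⟩
  · rintro (h | h)
    · exact G.irrefl h.1
    · exact h.1 rfl
  · have := Set.ncard_union_le ({v | G.Adj x v} \ R) B2
    omega
  · intro u c hc hxc
    obtain ⟨a, b, ha, hb, hab, w, hxw, hw⟩ := exists_walk_of_cycle G c hc hxc
    by_contra hcon
    have hZ : ∀ v ∈ w.support, v ∉ ({v | G.Adj x v} \ R) ∪ B2 := fun v hv h =>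
      hcon ⟨v, h, hw v hv⟩
    have hlift : ∀ v ∈ w.support, ∃ p : L.verts, π p = v := by
      intro v hv
      have hvx : v ≠ x := fun h => hxw (h ▸ hv)
      have h1 := hZ v hv
      by_cases hva : G.Adj x v
      · have : v ∈ R := by
          by_contra h
          exact h1 (Or.inl ⟨hva, h⟩)
        obtain ⟨c, hc, rfl⟩ := this
        exact ⟨_, rfl⟩
      · by_contra h
        apply h1
        refine Or.inr ⟨hvx, fun p hp => ⟨?_, hva⟩⟩
        by_contra hpS
        exact h ⟨⟨p, (hverts p).2 hpS⟩, hp⟩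
    have hconn : ∀ {a b : V} (w : G.Walk a b), (∀ v ∈ w.support, ∃ p : L.verts, π p = v) →
        ∀ p q : L.verts, π p = a → π q = b → K.Reachable p q := by
      intro a b w
      induction w with
      | nil =>
        intro _ p q hp hq
        exact hreach p q (Or.inr (Or.inr (Or.inl (hp.trans hq.symm))))
      | cons h w ih =>
        intro hl p q hp hq
        obtain ⟨p', hp'⟩ := hl _ (by
          rw [SimpleGraph.Walk.support_cons]
          exact List.mem_cons_of_mem _ w.start_mem_support)
        refine (hreach p p' (Or.inr (Or.inr (Or.inr ?_)))).trans (ih ?_ p' q hp' hq)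
        · rw [hp, hp']; exact h
        · intro v hv
          apply hl
          rw [SimpleGraph.Walk.support_cons]
          exact List.mem_cons_of_mem _ hv
    have hR : ∀ v ∈ w.support, G.Adj x v → v ∈ R := by
      intro v hv hva
      by_contra h
      exact hZ v hv (Or.inl ⟨hva, h⟩)
    obtain ⟨c1, hc1, h1⟩ := hR a w.start_mem_support ha
    obtain ⟨c2, hc2, h2⟩ := hR b w.end_mem_support hb
    have := hconn w hlift (rep c1) (rep c2) h1 h2
    rw [← SimpleGraph.ConnectedComponent.eq, hrep1 c1 hc1, hrep1 c2 hc2] at this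
    apply hab
    rw [← h1, ← h2, this]

/-- Thomassé's lemma: for every finite simple graph `G`, vertex `x`, and natural
number `k`, either `G` has an `x`-flower of order `k+1` (that is, `k+1` cycles
whose vertex sets pairwise intersect exactly in `{x}`), or there is a set
`Z ⊆ V(G) \ {x}` of size at most `2k` meeting every cycle of `G` through `x`. -/
theorem flower_or_small_hitting_set {V : Type*} [Fintype V]
    (G : SimpleGraph V) (x : V) (k : ℕ) :
    (∃ C : Fin (k + 1) → G.Walk x x, (∀ i, (C i).IsCycle) ∧
      ∀ i j, i ≠ j →
        {v | v ∈ (C i).support} ∩ {v | v ∈ (C j).support} = ({x} : Set V)) ∨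
    (∃ Z : Set V, x ∉ Z ∧ Z.ncard ≤ 2 * k ∧
      ∀ (u : V) (c : G.Walk u u), c.IsCycle → x ∈ c.support →
        ∃ z ∈ Z, z ∈ c.support) := by
  classical
  rcases Nat.lt_or_ge {v | G.Adj x v}.ncard (2 * (k + 1)) with hlt | hge
  · right
    by_cases hne : ∃ a, G.Adj x a
    · obtain ⟨a, ha⟩ := hne
      refine ⟨{v | G.Adj x v} \ {a}, fun h => G.irrefl h.1, ?_, ?_⟩
      · have := Set.ncard_sdiff_singleton_add_one (s := {v | G.Adj x v}) ha (Set.toFinite _)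
        omega
      · intro u c hc hx
        obtain ⟨b, b', hb, hb', hbb, w, -, hw⟩ := exists_walk_of_cycle G c hc hx
        by_cases h : b = a
        · exact ⟨b', ⟨hb', fun h' => hbb (h.trans (Set.mem_singleton_iff.1 h').symm)⟩,
            hw _ w.end_mem_support⟩
        · exact ⟨b, ⟨hb, h⟩, hw _ w.start_mem_support⟩
    · refine ⟨∅, by simp, by simp, ?_⟩
      intro u c hc hx
      obtain ⟨b, b', hb, -⟩ := exists_walk_of_cycle G c hc hx
      exact absurd ⟨b, hb⟩ hne
  obtain ⟨D, hD⟩ := Nat.exists_eq_add_of_le' hge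
  let d : V → ℕ := fun v => if v = x then D else if G.Adj x v then 1 else 2
  have hdx : d x = D := if_pos rfl
  have hdA : ∀ v, G.Adj x v → d v = 1 := fun v h => by
    simp only [d]; rw [if_neg h.ne', if_pos h]
  have hdB : ∀ v, v ≠ x → ¬ G.Adj x v → d v = 2 := fun v h h' => by
    simp only [d]; rw [if_neg h, if_neg h']
  let X := Σ v : V, Fin (d v)
  have hsig : ∀ v (i j : Fin (d v)), (⟨v, i⟩ : X) = ⟨v, j⟩ → i = j := fun v i j h => by
    cases h; rfl
  let π : X → V := Sigma.fst
  let n : X → X := fun p => ⟨p.1, if p.1 = x then p.2 else p.2.rev⟩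
  have hn : ∀ p, n (n p) = p := by
    rintro ⟨v, i⟩
    by_cases h : v = x <;> simp [n, h]
  have hπn : ∀ p, π (n p) = π p := fun p => rfl
  have hfix : ∀ p, n p = p ↔ π p = x ∨ G.Adj x (π p) := by
    rintro ⟨v, i⟩
    by_cases h : v = x
    · simp [n, h, π]
    · by_cases h' : G.Adj x v
      · have e := hdA v h'
        have hi := i.2
        simp only [n, π, h, h', if_false, or_true, iff_true]
        refine congrArg (Sigma.mk v) (Fin.ext ?_)
        rw [Fin.val_rev]
        omega
      · have e := hdB v h h'
        have hi := i.2
        simp only [n, π, h, h', if_false, or_false, iff_false]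
        intro hh
        have := congrArg Fin.val (hsig _ _ _ hh)
        rw [Fin.val_rev] at this
        omega
  have hπ : ∀ p q, π p = π q → p = q ∨ p = n q ∨ π p = x := by
    rintro ⟨v, i⟩ ⟨v', j⟩ (h : v = v')
    subst h
    by_cases h : v = x
    · exact Or.inr (Or.inr h)
    · have h2 : d v ≤ 2 := by
        by_cases h' : G.Adj x v
        · rw [hdA v h']; omega
        · rw [hdB v h h']
      have hi := i.2
      have hj := j.2
      by_cases hij : i = j
      · left; rw [hij]
      · right; left
        have : (i : ℕ) ≠ j := fun h => hij (Fin.ext h)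
        simp only [n, h, if_false]
        refine congrArg (Sigma.mk v) (Fin.ext ?_)
        rw [Fin.val_rev]
        omega
  have hsurj : ∀ v, v ≠ x → ∃ p, π p = v := by
    intro v h
    have h2 : 0 < d v := by
      by_cases h' : G.Adj x v
      · rw [hdA v h']; omega
      · rw [hdB v h h']; omega
    exact ⟨⟨v, ⟨0, h2⟩⟩, rfl⟩
  have hcx : {p : X | π p = x}.ncard = D := by
    have : {p : X | π p = x} = Set.range (fun i : Fin (d x) => (⟨x, i⟩ : X)) := by
      ext ⟨v, i⟩
      constructor
      · rintro (h : v = x)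
        subst h
        exact ⟨i, rfl⟩
      · rintro ⟨j, h⟩
        exact (congrArg Sigma.fst h).symm
    rw [this, ← Set.image_univ, Set.ncard_image_of_injective _ (f := fun i : Fin (d x) => (⟨x, i⟩ : X))
      (fun i j h => hsig x i j h),
      Set.ncard_univ, Nat.card_eq_fintype_card, Fintype.card_fin, hdx]
  have hcA : {p : X | G.Adj x (π p)}.ncard = {v | G.Adj x v}.ncard := by
    have : {v | G.Adj x v} = π '' {p : X | G.Adj x (π p)} := by
      ext v
      constructor
      · intro h
        obtain ⟨p, hp⟩ := hsurj v h.ne'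
        exact ⟨p, by rw [← hp] at h; exact h, hp⟩
      · rintro ⟨p, hp, rfl⟩
        exact hp
    rw [this]
    refine (Set.InjOn.ncard_image ?_).symm
    intro p hp q hq h
    rcases hπ p q h with h1 | h1 | h1
    · exact h1
    · rw [h1]; exact (hfix q).2 (Or.inr hq)
    · exact absurd h1.symm hp.ne
  have heven : Even (Nat.card X) := by
    -- the complement of the fibre over `x` and the neighbours is paired up by `n`
    have e1 : Even {p : X | ¬ (π p = x ∨ G.Adj x (π p))}.ncard := by
      apply even_ncard_of_involution _ n (fun p hp => hp) hn
      intro p hp h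
      exact hp ((hfix p).1 h)
    have e2 := Set.ncard_add_ncard_compl {p : X | π p = x ∨ G.Adj x (π p)}
    have e3 : {p : X | π p = x ∨ G.Adj x (π p)}.ncard = D + {v | G.Adj x v}.ncard := by
      rw [← hcx, ← hcA, ← Set.ncard_union_eq _ (Set.toFinite _) (Set.toFinite _)]
      · rfl
      · rw [Set.disjoint_left]
        intro p (hp : π p = x) (hp' : G.Adj x (π p))
        exact hp'.ne hp.symm
    rw [← e2, e3, hD]
    refine Even.add ⟨D + k + 1, by ring⟩ e1
  let H : SimpleGraph X :=
    { Adj := fun p q => p ≠ q ∧ (π p = x ∨ π q = x ∨ π p = π q ∨ G.Adj (π p) (π q))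
      symm := ⟨by
        rintro p q ⟨h1, h2⟩
        refine ⟨h1.symm, ?_⟩
        rcases h2 with h | h | h | h
        · exact Or.inr (Or.inl h)
        · exact Or.inl h
        · exact Or.inr (Or.inr (Or.inl h.symm))
        · exact Or.inr (Or.inr (Or.inr h.symm))⟩
      loopless := ⟨fun p h => h.1 rfl⟩ }
  by_cases hT : ∃ S, H.IsTutteViolator S
  · right
    obtain ⟨S, hS⟩ := hT
    exact hitting_of_violator G x k π n H (fun _ _ => Iff.rfl) hn hπn hπ hfix hsurj
      (by rw [hcx, hD]) heven S hS
  · left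
    obtain ⟨M, hM⟩ := SimpleGraph.tutte.2 (not_exists.1 hT)
    rw [SimpleGraph.Subgraph.isPerfectMatching_iff] at hM
    choose m hm1 hm2 using hM
    have hmm : ∀ p, m (m p) = p := fun p => (hm2 (m p) p (hm1 p).symm).symm
    refine flower_of_matching G x k π (Function.Involutive.toPerm m hmm)
      (Function.Involutive.toPerm n hn) hmm hn ?_ hπn hπ ?_ hfix ?_
    · intro p h
      exact (M.adj_sub (hm1 p)).ne h.symm
    · intro p h1 h2
      rcases (M.adj_sub (hm1 p)).2 with h | h | h | h
      · exact absurd h h1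
      · exact absurd h h2
      · exact Or.inl h
      · exact Or.inr h
    · rw [hcx, hcA, hD]
end

section
/- Let G be a finite simple graph, x a vertex of G, k a natural number, and y₁, ..., y_{k+1} distinct vertices of G, all different from x. Suppose there exist 2(k+1) connected induced subgraphs H₁¹, H₂¹, H₁², H₂², ..., H₁^{k+1}, H₂^{k+1} of G whose vertex sets are pairwise disjoint and contain neither x nor any of the vertices y₁, ..., y_{k+1}, and such that for every i ∈ {1, ..., k+1} and every j ∈ {1, 2}, both x and yᵢ have at least one neighbor in Hⱼⁱ. Then G contains k+1 cycles whose vertex sets pairwise intersect exactly in {x} (an x-flower of order k+1). -/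
open SimpleGraph in
/-- A path inside a connected induced piece. -/
lemma exists_path_in_piece {V : Type*} (G : SimpleGraph V) (S : Set V)
    (h : (G.induce S).Connected) {a b : V} (ha : a ∈ S) (hb : b ∈ S) :
    ∃ p : G.Walk a b, p.IsPath ∧ ∀ v ∈ p.support, v ∈ S := by
  obtain ⟨q, hq⟩ := (h.preconnected ⟨a, ha⟩ ⟨b, hb⟩).exists_isPath
  refine ⟨q.map (Embedding.induce S).toHom,
    hq.map (Embedding.induce (G := G) S).injective, ?_⟩
  intro v hv
  replace hv := (congrArg (v ∈ ·) (Walk.support_map (Embedding.induce (G := G) S).toHom q)).mp hv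
  rw [List.mem_map] at hv
  obtain ⟨w, -, rfl⟩ := hv
  exact w.2

open SimpleGraph in
/-- A cycle through `x` and `y` using two disjoint pieces. -/
lemma exists_cycle_two_pieces {V : Type*} (G : SimpleGraph V) (x y : V) (hyx : y ≠ x)
    (S T : Set V) (hST : Disjoint S T)
    (hS : (G.induce S).Connected) (hT : (G.induce T).Connected)
    (hxS : x ∉ S) (hxT : x ∉ T) (hyS : y ∉ S) (hyT : y ∉ T)
    (h1 : ∃ a ∈ S, G.Adj x a) (h2 : ∃ a ∈ T, G.Adj x a)
    (h3 : ∃ a ∈ S, G.Adj y a) (h4 : ∃ a ∈ T, G.Adj y a) :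
    ∃ C : G.Walk x x, C.IsCycle ∧ ∀ v ∈ C.support, v = x ∨ v = y ∨ v ∈ S ∨ v ∈ T := by
  obtain ⟨a, haS, hxa⟩ := h1
  obtain ⟨c, hcT, hxc⟩ := h2
  obtain ⟨b, hbS, hyb⟩ := h3
  obtain ⟨d, hdT, hyd⟩ := h4
  obtain ⟨p, hp, hpS⟩ := exists_path_in_piece G S hS haS hbS
  obtain ⟨q, hq, hqT⟩ := exists_path_in_piece G T hT hdT hcT
  have hd : ∀ v, v ∈ S → v ∈ T → False := fun v h h' => Set.disjoint_left.1 hST h h'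
  refine ⟨Walk.cons hxa (p.append (Walk.cons hyb.symm (Walk.cons hyd
    (q.append (Walk.cons hxc.symm Walk.nil))))), ?_, ?_⟩
  · rw [Walk.cons_isCycle_iff]
    constructor
    · rw [Walk.isPath_def]
      have e1 := hp.support_nodup
      have e2 := hq.support_nodup
      simp only [Walk.support_append, Walk.support_cons, Walk.support_nil, List.tail_cons]
      rw [List.nodup_append']
      refine ⟨e1, ?_, ?_⟩
      · rw [List.nodup_cons, List.nodup_append']
        refine ⟨?_, e2, by simp, ?_⟩
        · simp only [List.mem_append, List.mem_singleton]
          rintro (h | h)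
          · exact hyT (hqT _ h)
          · exact hyx h
        · intro v hv hv'
          simp only [List.mem_singleton] at hv'
          subst hv'
          exact hxT (hqT _ hv)
      · intro v hv hv'
        have := hpS _ hv
        simp only [List.mem_cons, List.mem_append, List.not_mem_nil, or_false] at hv'
        rcases hv' with rfl | h | rfl
        · exact hyS this
        · exact hd _ this (hqT _ h)
        · exact hxS this
    · simp only [Walk.edges_append, Walk.edges_cons, Walk.edges_nil, List.mem_append,
        List.mem_cons, List.not_mem_nil, or_false]
      rintro (h | h | h | h | h)
      · exact hxS (hpS _ (p.fst_mem_support_of_mem_edges h))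
      · rcases Sym2.eq_iff.1 h with ⟨rfl, -⟩ | ⟨rfl, -⟩
        · exact hxS hbS
        · exact hyx rfl
      · rcases Sym2.eq_iff.1 h with ⟨rfl, -⟩ | ⟨rfl, -⟩
        · exact hyx rfl
        · exact hxT hdT
      · exact hxT (hqT _ (q.fst_mem_support_of_mem_edges h))
      · rcases Sym2.eq_iff.1 h with ⟨rfl, -⟩ | ⟨-, rfl⟩
        · exact hxT hcT
        · exact hd _ haS hcT
  · intro v hv
    simp only [Walk.support_append, Walk.support_cons, Walk.support_nil, List.tail_cons,
      List.mem_cons, List.mem_append, List.not_mem_nil, or_false] at hv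
    rcases hv with h | h | h | h | h
    · exact Or.inl h
    · exact Or.inr (Or.inr (Or.inl (hpS _ h)))
    · exact Or.inr (Or.inl h)
    · exact Or.inr (Or.inr (Or.inr (hqT _ h)))
    · exact Or.inl h

/-- If there are `k+1` vertices `y₁, …, y_{k+1}` distinct from each other and from `x`,
and `2(k+1)` pairwise disjoint connected induced subgraphs `Hⱼⁱ` (for `i ∈ Fin (k+1)`,
`j ∈ Fin 2`) avoiding `x` and all the `yᵢ`, such that for all `i, j` both `x` and `yᵢ`
have a neighbor in `Hⱼⁱ`, then `G` has an `x`-flower of order `k+1`: `k+1` cycles whose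
vertex sets pairwise intersect exactly in `{x}`. -/
theorem disjoint_connected_pieces_give_flower {V : Type*} [Fintype V]
    (G : SimpleGraph V) (x : V) (k : ℕ)
    (y : Fin (k + 1) → V) (hyinj : Function.Injective y) (hyx : ∀ i, y i ≠ x)
    (H : Fin (k + 1) → Fin 2 → Set V)
    (hdisj : ∀ (i i' : Fin (k + 1)) (j j' : Fin 2),
      (i, j) ≠ (i', j') → Disjoint (H i j) (H i' j'))
    (hconn : ∀ i j, (G.induce (H i j)).Connected)
    (hxH : ∀ i j, x ∉ H i j)
    (hyH : ∀ i j i', y i' ∉ H i j)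
    (hxadj : ∀ i j, ∃ a ∈ H i j, G.Adj x a)
    (hyadj : ∀ i j, ∃ b ∈ H i j, G.Adj (y i) b) :
    ∃ C : Fin (k + 1) → G.Walk x x, (∀ i, (C i).IsCycle) ∧
      ∀ i j, i ≠ j →
        {v | v ∈ (C i).support} ∩ {v | v ∈ (C j).support} = ({x} : Set V) := by
  have key := fun i => exists_cycle_two_pieces G x (y i) (hyx i) (H i 0) (H i 1)
    (hdisj i i 0 1 (by simp)) (hconn i 0) (hconn i 1) (hxH i 0) (hxH i 1)
    (hyH i 0 i) (hyH i 1 i) (hxadj i 0) (hxadj i 1) (hyadj i 0) (hyadj i 1)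
  choose C hC hsupp using key
  refine ⟨C, hC, ?_⟩
  intro i j hij
  have hsupp' : ∀ i, ∀ v ∈ (C i).support, v = x ∨ v = y i ∨ ∃ l, v ∈ H i l := by
    intro i v hv
    rcases hsupp i v hv with h | h | h | h
    · exact Or.inl h
    · exact Or.inr (Or.inl h)
    · exact Or.inr (Or.inr ⟨0, h⟩)
    · exact Or.inr (Or.inr ⟨1, h⟩)
  ext v
  simp only [Set.mem_inter_iff, Set.mem_ofPred_eq, Set.mem_singleton_iff]
  constructor
  · rintro ⟨h1, h2⟩
    by_contra hne
    rcases hsupp' i v h1 with h | h | ⟨l, h⟩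
    · exact hne h
    · rcases hsupp' j v h2 with h' | h' | ⟨l', h'⟩
      · exact hne h'
      · exact hij (hyinj (h.symm.trans h'))
      · exact hyH j l' i (h ▸ h')
    · rcases hsupp' j v h2 with h' | h' | ⟨l', h'⟩
      · exact hne h'
      · exact hyH i l j (h' ▸ h)
      · exact Set.disjoint_left.1 (hdisj i j l l' (by simp [hij])) h h'
  · rintro rfl
    exact ⟨(C i).start_mem_support, (C j).start_mem_support⟩
end
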